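/- arXiv:2102.13193 — 2 statements merged into one kernel-verified Lean document; each statement's English description precedes it below -/
import Mathlib

section
/- Let G = K_n be the complete graph on n vertices, T a spanning tree of G, and c a tree-cycle of T of length k with vertices w_1, …, w_k, and let q_i = |closest-point-set(w_i, c)|. Then the cycle intersection number of c satisfies ∩_T(c) = k(k-3)/2 + (n-k)(k-1) + (1/2) Σ_{i=1}^{k} q_i (n - k - q_i). -/
open SimpleGraph

/-- The set of edges lying on some path (in a tree: the unique path) between `x` and `y`
in the graph `T`. -/
def pathEdges {V : Type*} (T : SimpleGraph V) (x y : V) : Set (Sym2 V) :=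
  {f | ∃ p : T.Walk x y, p.IsPath ∧ f ∈ p.edges}

/-- The edge set of the tree-cycle induced (in the spanning tree `T`) by the cycle-edge `e`:
the edge `e` itself together with the edges of the (unique) path in `T` between
the endpoints of `e`. -/
def cycEdges {V : Type*} (T : SimpleGraph V) (e : Sym2 V) : Set (Sym2 V) :=
  insert e {f | ∃ x y, e = s(x, y) ∧ f ∈ pathEdges T x y}

/-- The vertex set of the tree-cycle induced (in the spanning tree `T`) by the
cycle-edge `e`. -/
def cycVerts {V : Type*} (T : SimpleGraph V) (e : Sym2 V) : Set V :=
  {v | ∃ x y, e = s(x, y) ∧ ∃ p : T.Walk x y, p.IsPath ∧ v ∈ p.support}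

/-- Two tree-cycles (induced by the cycle-edges `e` and `f`) have non-empty intersection:
some edge of `T` belongs to both of them. -/
def cyclesIntersect {V : Type*} (T : SimpleGraph V) (e f : Sym2 V) : Prop :=
  (cycEdges T e ∩ cycEdges T f ∩ T.edgeSet).Nonempty

/-- The cycle intersection number `∩_T(c)` of the tree-cycle `c` induced by the
cycle-edge `e`: the number of tree-cycles distinct from `c` whose intersection with `c`
is non-empty. -/
noncomputable def cycleInterNum {V : Type*} (G T : SimpleGraph V) (e : Sym2 V) : ℕ :=
  {f | f ∈ G.edgeSet \ T.edgeSet ∧ f ≠ e ∧ cyclesIntersect T e f}.ncard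

/-- The tree intersection number `∩_G(T)`: the number of unordered pairs of distinct
tree-cycles of `T` whose intersection is non-empty. -/
noncomputable def treeInterNum {V : Type*} (G T : SimpleGraph V) : ℕ :=
  {p : Sym2 (Sym2 V) | ∃ e f : Sym2 V, p = s(e, f) ∧ e ≠ f ∧
    e ∈ G.edgeSet \ T.edgeSet ∧ f ∈ G.edgeSet \ T.edgeSet ∧ cyclesIntersect T e f}.ncard

/-- `T` is a star spanning tree of `G` with center `v`. -/
def IsStarSpanningTree {V : Type*} (G T : SimpleGraph V) (v : V) : Prop :=
  T ≤ G ∧ T.IsTree ∧ ∀ u, u ≠ v → T.Adj v u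

/-- `closest-point-set(w, c)`: the set of vertices outside the tree-cycle `c` (induced by
the cycle-edge `e`) whose closest point on `c` (with respect to distance in `T`) is `w`. -/
def closestPointSet {V : Type*} (T : SimpleGraph V) (e : Sym2 V) (w : V) : Set V :=
  {v | v ∉ cycVerts T e ∧ ∀ u ∈ cycVerts T e, T.dist v w ≤ T.dist v u}

/-!
Deleting the edges of the tree-cycle `c` of `e` from `T` leaves a forest with exactly one component
per vertex of `c`, and the component of `w` consists of `w` and the vertices whose closest point on
`c` is `w`. For a cycle-edge `f = s(x, y)`, the tree-cycles of `e` and `f` intersect iff the path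
from `x` to `y` in `T` uses a deleted edge, i.e. iff `x` and `y` lie in different components. The
pairs of vertices in different components are therefore the edges of `c` itself (`k` of them)
together with the edges counted by `∩_T(c)`. As the components have sizes `q i + 1`, summing to `n`,
there are `(1/2) Σ_i (q i + 1) (n - (q i + 1))` such pairs.
-/

section Graph

variable {V ι : Type*} {G : SimpleGraph V} {a b u v w x y : V}

lemma eq_of_isPath_of_isAcyclic (hG : G.IsAcyclic) {p p' : G.Walk x y} (hp : p.IsPath)
    (hp' : p'.IsPath) : p = p' :=
  congrArg Subtype.val ((hG.subsingleton_path x y).elim ⟨p, hp⟩ ⟨p', hp'⟩)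

lemma reachable_deleteEdges_iff_of_isAcyclic (hG : G.IsAcyclic) (s : Set (Sym2 V))
    {p : G.Walk x y} (hp : p.IsPath) :
    (G.deleteEdges s).Reachable x y ↔ ∀ f ∈ p.edges, f ∉ s := by
  refine ⟨fun h f hf => ?_, fun h => ⟨p.toDeleteEdges s h⟩⟩
  obtain ⟨r, hr⟩ := h.exists_isPath
  have hpr : p = r.mapLe (G.deleteEdges_le s) := eq_of_isPath_of_isAcyclic hG hp (hr.mapLe _)
  rw [hpr, Walk.edges_mapLe_eq_edges] at hf
  have hfs := r.edges_subset_edgeSet hf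
  rw [edgeSet_deleteEdges] at hfs
  exact hfs.2

lemma exists_isPath_edges_subset_of_mem_support (P : G.Walk a b) (hu : u ∈ P.support)
    (hv : v ∈ P.support) : ∃ r : G.Walk u v, r.IsPath ∧ r.edges ⊆ P.edges := by
  classical
  refine ⟨((P.takeUntil u hu).reverse.append (P.takeUntil v hv)).bypass, Walk.bypass_isPath _, ?_⟩
  intro f hf
  have hf_append := Walk.edges_bypass_subset_edges _ hf
  rw [Walk.edges_append, Walk.edges_reverse, List.mem_append, List.mem_reverse] at hf_append
  exact hf_append.elim (fun h => P.edges_takeUntil_subset_edges hu h)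
    (fun h => P.edges_takeUntil_subset_edges hv h)

lemma eq_of_reachable_deleteEdges_edgeSet (hG : G.IsAcyclic) (P : G.Walk a b)
    (hu : u ∈ P.support) (hv : v ∈ P.support)
    (huv : (G.deleteEdges P.edgeSet).Reachable u v) : u = v := by
  obtain ⟨r, hr, hrP⟩ := exists_isPath_edges_subset_of_mem_support P hu hv
  have hr_notMem := (reachable_deleteEdges_iff_of_isAcyclic hG _ hr).1 huv
  have hr_edges : r.edges = [] := List.eq_nil_iff_forall_not_mem.2 fun f hf =>
    hr_notMem f hf (hrP hf)
  exact Walk.eq_of_length_eq_zero (by rw [← r.length_edges, hr_edges, List.length_nil])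

/- A shortest walk from `v` to `w` meets only vertices strictly closer to `v` before it reaches `w`,
so it avoids every deleted edge. -/
lemma reachable_deleteEdges_of_forall_dist_le (hvw : G.Reachable v w) (s : Set (Sym2 V))
    (hs : ∀ f ∈ s, ∀ u ∈ f, G.dist v w ≤ G.dist v u) : (G.deleteEdges s).Reachable v w := by
  classical
  obtain ⟨p, hp⟩ := hvw.exists_walk_length_eq_dist
  refine ⟨p.toDeleteEdges s fun f hf hfs => ?_⟩
  obtain ⟨u, huf, huw⟩ : ∃ u ∈ f, u ≠ w := by
    induction f using Sym2.ind with | _ x y =>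
    by_cases hx : x = w
    · exact ⟨y, Sym2.mem_mk_right x y, fun hy => (p.adj_of_mem_edges hf).ne (hx.trans hy.symm)⟩
    · exact ⟨x, Sym2.mem_mk_left x y, hx⟩
  have hu : u ∈ p.support := p.mem_support_of_mem_edges hf huf
  refine (hs f hfs u huf).not_gt ?_
  calc G.dist v u ≤ (p.takeUntil u hu).length := dist_le _
    _ < p.length := Walk.length_takeUntil_lt_length hu huw
    _ = G.dist v w := hp

lemma two_mul_ncard_edgeSet_comap_top [Finite V] [Fintype ι] (f : V → ι) :
    2 * ((⊤ : SimpleGraph ι).comap f).edgeSet.ncard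
      = ∑ i, (f ⁻¹' {i}).ncard * (f ⁻¹' {i})ᶜ.ncard := by
  classical
  have := Fintype.ofFinite V
  rw [← coe_edgeFinset, Set.ncard_coe_finset, two_mul_card_edgeFinset,
    Finset.card_eq_sum_card_fiberwise (f := fun z => f z.1) (t := Finset.univ)
      fun _ _ => Finset.mem_coe.2 (Finset.mem_univ _)]
  refine Finset.sum_congr rfl fun i _ => ?_
  rw [← Set.ncard_prod, ← Set.ncard_coe_finset]
  congr 1
  ext ⟨x, y⟩
  simp only [comap_adj, top_adj, Finset.coe_filter, Finset.mem_filter, Finset.mem_univ, true_and,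
    Set.mem_ofPred_eq, Set.mem_prod, Set.mem_preimage, Set.mem_singleton_iff, Set.mem_compl_iff]
  grind

lemma sum_ncard_preimage_singleton [Fintype V] [Fintype ι] (f : V → ι) :
    ∑ i, (f ⁻¹' {i}).ncard = Fintype.card V := by
  classical
  rw [← Finset.card_univ, Finset.card_eq_sum_card_fiberwise (f := f) (t := Finset.univ)
    fun _ _ => Finset.mem_coe.2 (Finset.mem_univ _)]
  refine Finset.sum_congr rfl fun i _ => ?_
  rw [← Set.ncard_coe_finset]
  congr 1
  ext x
  simp

/-- The graph joining any two vertices that lie in different connected components of `G`, encoded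
as the pullback of the complete graph on the components. -/
def crossComponentGraph (G : SimpleGraph V) : SimpleGraph V :=
  (⊤ : SimpleGraph G.ConnectedComponent).comap G.connectedComponentMk

lemma crossComponentGraph_adj : (crossComponentGraph G).Adj x y ↔ ¬G.Reachable x y :=
  ConnectedComponent.eq.not

lemma two_mul_ncard_edgeSet_crossComponentGraph [Finite V] [Fintype G.ConnectedComponent] :
    2 * (crossComponentGraph G).edgeSet.ncard
      = ∑ K : G.ConnectedComponent, K.supp.ncard * K.suppᶜ.ncard :=
  two_mul_ncard_edgeSet_comap_top G.connectedComponentMk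

lemma sum_ncard_supp [Fintype V] [Fintype G.ConnectedComponent] :
    ∑ K : G.ConnectedComponent, K.supp.ncard = Fintype.card V :=
  sum_ncard_preimage_singleton G.connectedComponentMk

end Graph

/-- The spanning forest left of `T` after deleting the edges of the tree-cycle of `e`; its
components are the branches of `T` hanging off the vertices of that tree-cycle. -/
def cycForest {V : Type*} (T : SimpleGraph V) (e : Sym2 V) : SimpleGraph V :=
  T.deleteEdges (cycEdges T e)

section TreeCycle

variable {V ι : Type*} {G T : SimpleGraph V} {e f : Sym2 V} {u v w x y : V}

lemma cycVerts_eq_support (hT : T.IsAcyclic) {p : T.Walk x y} (hp : p.IsPath) :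
    cycVerts T s(x, y) = {v | v ∈ p.support} := by
  ext v
  refine ⟨?_, fun hv => ⟨x, y, rfl, p, hp, hv⟩⟩
  rintro ⟨x', y', hxy, p', hp', hv⟩
  rcases Sym2.eq_iff.1 hxy with ⟨rfl, rfl⟩ | ⟨rfl, rfl⟩
  · rwa [eq_of_isPath_of_isAcyclic hT hp' hp] at hv
  · rwa [eq_of_isPath_of_isAcyclic hT hp' hp.reverse, Walk.support_reverse, List.mem_reverse] at hv

lemma cycEdges_eq_insert_edgeSet (hT : T.IsAcyclic) {p : T.Walk x y} (hp : p.IsPath) :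
    cycEdges T s(x, y) = insert s(x, y) p.edgeSet := by
  rw [cycEdges]
  congr 1
  ext f
  refine ⟨?_, fun hf => ⟨x, y, rfl, p, hp, hf⟩⟩
  rintro ⟨x', y', hxy, p', hp', hf⟩
  rcases Sym2.eq_iff.1 hxy with ⟨rfl, rfl⟩ | ⟨rfl, rfl⟩
  · rwa [eq_of_isPath_of_isAcyclic hT hp' hp] at hf
  · rwa [eq_of_isPath_of_isAcyclic hT hp' hp.reverse, Walk.edges_reverse, List.mem_reverse] at hf

lemma cycEdges_inter_edgeSet (hT : T.IsAcyclic) {p : T.Walk x y} (hp : p.IsPath) :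
    cycEdges T s(x, y) ∩ T.edgeSet = p.edgeSet := by
  have hpT : p.edgeSet ⊆ T.edgeSet := fun _ hf => p.edges_subset_edgeSet hf
  rw [cycEdges_eq_insert_edgeSet hT hp]
  refine Set.Subset.antisymm ?_ fun f hf => ⟨Or.inr hf, hpT hf⟩
  rintro f ⟨rfl | hf, hfT⟩
  · rw [mem_edgeSet] at hfT
    rw [eq_of_isPath_of_isAcyclic hT hp (Walk.IsPath.of_adj hfT)]
    simp
  · exact hf

lemma cycForest_eq_deleteEdges_edgeSet (hT : T.IsAcyclic) {p : T.Walk x y} (hp : p.IsPath) :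
    cycForest T s(x, y) = T.deleteEdges p.edgeSet := by
  rw [cycForest, deleteEdges_eq_inter_edgeSet, cycEdges_inter_edgeSet hT hp]

lemma cycEdges_subset_insert_edgeSet : cycEdges T e ⊆ insert e T.edgeSet := by
  rintro f (rfl | ⟨x, y, -, p, -, hf⟩)
  · exact Set.mem_insert _ _
  · exact Or.inr (p.edges_subset_edgeSet hf)

lemma mem_cycVerts_of_mem_cycEdges (hT : T.Connected) (hf : f ∈ cycEdges T e) (hx : x ∈ f) :
    x ∈ cycVerts T e := by
  rcases hf with rfl | ⟨a, b, rfl, p, hp, hf⟩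
  · obtain ⟨y, rfl⟩ := hx
    obtain ⟨p, hp⟩ := (hT x y).exists_isPath
    exact ⟨x, y, rfl, p, hp, p.start_mem_support⟩
  · exact ⟨a, b, rfl, p, hp, p.mem_support_of_mem_edges hf hx⟩

lemma cycVerts_nonempty (hT : T.Connected) (e : Sym2 V) : (cycVerts T e).Nonempty :=
  ⟨_, mem_cycVerts_of_mem_cycEdges hT (Set.mem_insert e _) e.out_fst_mem⟩

lemma ncard_cycEdges (hT : T.IsTree) (he : e ∉ T.edgeSet) :
    (cycEdges T e).ncard = (cycVerts T e).ncard := by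
  classical
  induction e using Sym2.ind with | _ a b =>
  obtain ⟨p, hp⟩ := (hT.connected a b).exists_isPath
  have hp_edges : p.edgeSet = (p.edges.toFinset : Set (Sym2 V)) := (List.coe_toFinset _).symm
  have hp_support : {v | v ∈ p.support} = (p.support.toFinset : Set V) :=
    (List.coe_toFinset _).symm
  have he_notMem : s(a, b) ∉ p.edgeSet := fun h => he (p.edges_subset_edgeSet h)
  rw [cycEdges_eq_insert_edgeSet hT.isAcyclic hp, cycVerts_eq_support hT.isAcyclic hp,
    Set.ncard_insert_of_notMem he_notMem (hp_edges ▸ Finset.finite_toSet _), hp_edges, hp_support,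
    Set.ncard_coe_finset, Set.ncard_coe_finset,
    List.toFinset_card_of_nodup hp.isTrail.edges_nodup,
    List.toFinset_card_of_nodup hp.support_nodup, p.length_edges, p.length_support]

lemma eq_of_reachable_cycForest (hT : T.IsAcyclic) (hu : u ∈ cycVerts T e)
    (hv : v ∈ cycVerts T e) (huv : (cycForest T e).Reachable u v) : u = v := by
  obtain ⟨a, b, rfl, p, hp, hu⟩ := hu
  rw [cycVerts_eq_support hT hp] at hv
  rw [cycForest_eq_deleteEdges_edgeSet hT hp] at huv
  exact eq_of_reachable_deleteEdges_edgeSet hT p hu hv huv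

lemma reachable_cycForest_of_forall_dist_le (hT : T.Connected)
    (hw : ∀ u ∈ cycVerts T e, T.dist v w ≤ T.dist v u) : (cycForest T e).Reachable v w :=
  reachable_deleteEdges_of_forall_dist_le (hT v w) _ fun _ hf u hu =>
    hw u (mem_cycVerts_of_mem_cycEdges hT hf hu)

lemma exists_mem_cycVerts_forall_dist_le (hT : T.Connected) (e : Sym2 V) (v : V) :
    ∃ w ∈ cycVerts T e, ∀ u ∈ cycVerts T e, T.dist v w ≤ T.dist v u :=
  ⟨Function.argminOn (T.dist v) _ (cycVerts_nonempty hT e), Function.argminOn_mem _ _ _,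
    fun _ hu => Function.argminOn_le _ _ hu⟩

lemma forall_dist_le_iff_reachable_cycForest (hT : T.IsTree) (hw : w ∈ cycVerts T e) :
    (∀ u ∈ cycVerts T e, T.dist v w ≤ T.dist v u) ↔ (cycForest T e).Reachable v w := by
  refine ⟨reachable_cycForest_of_forall_dist_le hT.connected, fun hvw => ?_⟩
  obtain ⟨w', hw', hmin⟩ := exists_mem_cycVerts_forall_dist_le hT.connected e v
  have hvw' := reachable_cycForest_of_forall_dist_le hT.connected hmin
  rwa [eq_of_reachable_cycForest hT.isAcyclic hw hw' (hvw.symm.trans hvw')]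

lemma bijOn_connectedComponentMk_cycVerts (hT : T.IsTree) (e : Sym2 V) :
    Set.BijOn (cycForest T e).connectedComponentMk (cycVerts T e) Set.univ := by
  refine ⟨Set.mapsTo_univ _ _, fun u hu v hv huv =>
    eq_of_reachable_cycForest hT.isAcyclic hu hv (ConnectedComponent.eq.1 huv), ?_⟩
  rintro ⟨v⟩ -
  obtain ⟨w, hw, hmin⟩ := exists_mem_cycVerts_forall_dist_le hT.connected e v
  exact ⟨w, hw, ConnectedComponent.sound
    (reachable_cycForest_of_forall_dist_le hT.connected hmin).symm⟩

lemma supp_connectedComponentMk_cycForest (hT : T.IsTree) (hw : w ∈ cycVerts T e) :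
    ((cycForest T e).connectedComponentMk w).supp = insert w (closestPointSet T e w) := by
  ext v
  rw [ConnectedComponent.mem_supp_iff, ConnectedComponent.eq, Set.mem_insert_iff, closestPointSet,
    Set.mem_ofPred_eq, forall_dist_le_iff_reachable_cycForest hT hw]
  constructor
  · intro hvw
    by_cases hv : v ∈ cycVerts T e
    · exact Or.inl (eq_of_reachable_cycForest hT.isAcyclic hv hw hvw)
    · exact Or.inr ⟨hv, hvw⟩
  · rintro (rfl | hv)
    · exact Reachable.refl v
    · exact hv.2

lemma ncard_supp_connectedComponentMk_cycForest [Finite V] (hT : T.IsTree)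
    (hw : w ∈ cycVerts T e) :
    ((cycForest T e).connectedComponentMk w).supp.ncard = (closestPointSet T e w).ncard + 1 := by
  rw [supp_connectedComponentMk_cycForest hT hw, Set.ncard_insert_of_notMem fun h => h.1 hw]

lemma cyclesIntersect_iff_not_reachable_cycForest (hT : T.IsTree) :
    cyclesIntersect T e s(x, y) ↔ ¬(cycForest T e).Reachable x y := by
  obtain ⟨p, hp⟩ := (hT.connected x y).exists_isPath
  rw [cyclesIntersect, Set.inter_assoc, cycEdges_inter_edgeSet hT.isAcyclic hp, cycForest,
    reachable_deleteEdges_iff_of_isAcyclic hT.isAcyclic _ hp, Set.inter_comm]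
  push Not
  rfl

lemma reachable_cycForest_iff_of_adj (hT : T.IsAcyclic) (hxy : T.Adj x y) :
    (cycForest T e).Reachable x y ↔ s(x, y) ∉ cycEdges T e := by
  rw [cycForest, reachable_deleteEdges_iff_of_isAcyclic hT _ (Walk.IsPath.of_adj hxy)]
  simp

lemma cyclesIntersect_self (hT : T.IsTree) (he : ¬e.IsDiag) : cyclesIntersect T e e := by
  induction e using Sym2.ind with | _ a b =>
  have hmem {v : V} (hv : v ∈ s(a, b)) : v ∈ cycVerts T s(a, b) :=
    mem_cycVerts_of_mem_cycEdges hT.connected (Set.mem_insert _ _) hv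
  rw [cyclesIntersect_iff_not_reachable_cycForest hT]
  exact fun hab => he (eq_of_reachable_cycForest hT.isAcyclic (hmem (Sym2.mem_mk_left a b))
    (hmem (Sym2.mem_mk_right a b)) hab)

lemma edgeSet_inf_crossComponentGraph_cycForest (hT : T.IsTree) (hTG : T ≤ G)
    (he : e ∈ G.edgeSet) :
    (G ⊓ crossComponentGraph (cycForest T e)).edgeSet
      = {f | f ∈ G.edgeSet \ T.edgeSet ∧ f ≠ e ∧ cyclesIntersect T e f} ∪ cycEdges T e := by
  ext f
  induction f using Sym2.ind with | _ x y =>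
  simp only [mem_edgeSet, inf_adj, crossComponentGraph_adj, Set.mem_union, Set.mem_ofPred_eq,
    Set.mem_sdiff]
  by_cases hxyT : T.Adj x y
  · simp [reachable_cycForest_iff_of_adj hT.isAcyclic hxyT, hxyT, hTG hxyT]
  rw [← cyclesIntersect_iff_not_reachable_cycForest hT]
  by_cases hxye : s(x, y) = e
  · subst hxye
    have hself := cyclesIntersect_self hT (G.not_isDiag_of_mem_edgeSet he)
    exact iff_of_true ⟨he, hself⟩ (Or.inr (Set.mem_insert _ _))
  · have hxy_notMem : s(x, y) ∉ cycEdges T e := fun h =>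
      (cycEdges_subset_insert_edgeSet h).elim hxye hxyT
    simp [hxyT, hxye, hxy_notMem]

lemma cycleInterNum_add_ncard_cycVerts [Finite V] (hT : T.IsTree) (hTG : T ≤ G)
    (he : e ∈ G.edgeSet \ T.edgeSet) :
    cycleInterNum G T e + (cycVerts T e).ncard
      = (G ⊓ crossComponentGraph (cycForest T e)).edgeSet.ncard := by
  have hdisj : Disjoint {f | f ∈ G.edgeSet \ T.edgeSet ∧ f ≠ e ∧ cyclesIntersect T e f}
      (cycEdges T e) :=
    Set.disjoint_left.2 fun _ hf hfe => (cycEdges_subset_insert_edgeSet hfe).elim hf.2.1 hf.1.2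
  rw [edgeSet_inf_crossComponentGraph_cycForest hT hTG he.1, Set.ncard_union_eq hdisj,
    ncard_cycEdges hT he.2, cycleInterNum]

section Enumeration

variable [Fintype ι] {w : ι → V}

lemma sum_connectedComponent_cycForest (hT : T.IsTree) (hw : Set.BijOn w Set.univ (cycVerts T e))
    [Fintype (cycForest T e).ConnectedComponent] {M : Type*} [AddCommMonoid M]
    (g : (cycForest T e).ConnectedComponent → M) :
    ∑ K, g K = ∑ i, g ((cycForest T e).connectedComponentMk (w i)) :=
  ((Set.bijOn_univ.1 ((bijOn_connectedComponentMk_cycVerts hT e).comp hw)).sum_comp g).symm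

lemma sum_ncard_closestPointSet_add_one [Fintype V] (hT : T.IsTree)
    (hw : Set.BijOn w Set.univ (cycVerts T e)) :
    ∑ i, ((closestPointSet T e (w i)).ncard + 1) = Fintype.card V := by
  have := Fintype.ofFinite (cycForest T e).ConnectedComponent
  rw [← sum_ncard_supp (G := cycForest T e), sum_connectedComponent_cycForest hT hw]
  exact Finset.sum_congr rfl fun i _ =>
    (ncard_supp_connectedComponentMk_cycForest hT (hw.mapsTo (Set.mem_univ i))).symm

lemma two_mul_cycleInterNum_top_add_ncard_cycVerts [Fintype V] (hT : T.IsTree)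
    (he : e ∈ (⊤ : SimpleGraph V).edgeSet \ T.edgeSet)
    (hw : Set.BijOn w Set.univ (cycVerts T e)) :
    2 * ((cycleInterNum ⊤ T e : ℚ) + (cycVerts T e).ncard)
      = ∑ i, (((closestPointSet T e (w i)).ncard : ℚ) + 1)
          * (Fintype.card V - ((closestPointSet T e (w i)).ncard + 1)) := by
  have := Fintype.ofFinite (cycForest T e).ConnectedComponent
  have hcount := two_mul_ncard_edgeSet_crossComponentGraph (G := cycForest T e)
  rw [← top_inf_eq (crossComponentGraph _),
    ← cycleInterNum_add_ncard_cycVerts hT le_top he,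
    sum_connectedComponent_cycForest hT hw] at hcount
  rw [← Nat.cast_add, ← Nat.cast_ofNat, ← Nat.cast_mul, hcount, Nat.cast_sum]
  refine Finset.sum_congr rfl fun i _ => ?_
  have hsize := ncard_supp_connectedComponentMk_cycForest hT (hw.mapsTo (Set.mem_univ i))
  have hcompl := Set.ncard_add_ncard_compl ((cycForest T e).connectedComponentMk (w i)).supp
  rw [hsize, Nat.card_eq_fintype_card] at hcompl
  rw [← hcompl, hsize]
  push_cast
  ring

end Enumeration

end TreeCycle

lemma sum_add_one_mul_sub_add_one {ι R : Type*} [Fintype ι] [CommRing R] (q : ι → R) (n k : R) :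
    ∑ i, (q i + 1) * (n - (q i + 1))
      = ∑ i, q i * (n - k - q i) + (k - 2) * ∑ i, q i + Fintype.card ι * (n - 1) := by
  have hterm (i : ι) : (q i + 1) * (n - (q i + 1))
      = q i * (n - k - q i) + (k - 2) * q i + (n - 1) := by ring
  simp only [hterm, Finset.sum_add_distrib, Finset.mul_sum, Finset.sum_const, Finset.card_univ,
    nsmul_eq_mul]

/-- In the complete graph `K_n`, for a spanning tree `T` and a tree-cycle
`c` of length `k` with vertices `w 1, …, w k` and `q i = |closest-point-set(w i, c)|`,
the cycle intersection number of `c` is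
`∩_T(c) = k(k-3)/2 + (n-k)(k-1) + (1/2) Σ_i q i (n - k - q i)`. -/
theorem stmt_4 {V : Type*} [Fintype V] (n : ℕ) (hn : Fintype.card V = n)
    (T : SimpleGraph V) (hle : T ≤ (⊤ : SimpleGraph V)) (hT : T.IsTree)
    (e : Sym2 V) (he : e ∈ (⊤ : SimpleGraph V).edgeSet \ T.edgeSet)
    (k : ℕ) (hk : (cycVerts T e).ncard = k)
    (w : Fin k → V) (hw : Set.BijOn w Set.univ (cycVerts T e))
    (q : Fin k → ℕ) (hq : ∀ i, q i = (closestPointSet T e (w i)).ncard) :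
    (cycleInterNum (⊤ : SimpleGraph V) T e : ℚ)
      = (k : ℚ) * ((k : ℚ) - 3) / 2 + ((n : ℚ) - (k : ℚ)) * ((k : ℚ) - 1)
        + (1 / 2) * ∑ i : Fin k, (q i : ℚ) * ((n : ℚ) - (k : ℚ) - (q i : ℚ)) := by
  obtain rfl : q = fun i => (closestPointSet T e (w i)).ncard := funext hq
  have hcount := two_mul_cycleInterNum_top_add_ncard_cycVerts hT he hw
  have hsum : ∑ i, ((closestPointSet T e (w i)).ncard : ℚ) = n - k := by
    have hsum_add_one := sum_ncard_closestPointSet_add_one hT hw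
    rw [Finset.sum_add_distrib, hn] at hsum_add_one
    rw [← hsum_add_one]
    simp
  rw [hk, hn, sum_add_one_mul_sub_add_one _ (n : ℚ) k, hsum, Fintype.card_fin] at hcount
  linear_combination hcount / 2
end

section
/- Let G = K_n be the complete graph on n vertices and let T_s be a star spanning tree of G. Then ∩(T_s) ≤ ∩(T) for every spanning tree T of G; that is, star spanning trees minimize the tree intersection number among all spanning trees of the complete graph. -/
open SimpleGraph

/-!
In a star with center `v`, the tree-cycle of a cycle-edge `xy` runs along the two edges `vx`, `vy`,
so it meets another tree-cycle only if the cycle-edges share an endpoint: it meets at most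
`2 (n - 3)` others. Conversely, in any spanning tree the tree-path of a cycle-edge `xy` starts with
two edges `xa`, `ac`. Deleting them splits the tree into three parts, and every pair of vertices
from different parts has a tree-path through `xa` or `ac`. Each vertex is separated from at least
two of `x`, `a`, `c`, which makes at least `2 n - 3` separated pairs, as only the three pairs among
`x`, `a`, `c` are counted twice. At most three of them (`xa`, `ac` and `xy`) are not cycle-edges
other than `xy`, so the tree-cycle of `xy` meets at least `2 (n - 3)` others. As all spanning trees
have equally many cycle-edges, summing over the tree-cycles gives the theorem.
-/

open Finset

section

variable {V : Type*} {G T : SimpleGraph V}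

theorem sum_degree_le_card_biUnion_incidenceFinset_add_choose_two [Fintype V] [DecidableEq V]
    [DecidableRel G.Adj] (s : Finset V) :
    ∑ v ∈ s, G.degree v ≤ #(s.biUnion fun v => G.incidenceFinset v) + (#s).choose 2 := by
  induction s using Finset.induction_on with
  | empty => simp
  | insert v s hv ih =>
    have h_common : #(G.incidenceFinset v ∩ s.biUnion fun w => G.incidenceFinset w) ≤ #s := by
      have h_subset : G.incidenceFinset v ∩ s.biUnion (fun w => G.incidenceFinset w) ⊆
          s.image fun w => s(v, w) := by
        intro e he
        simp only [mem_inter, mem_biUnion, mem_incidenceFinset] at he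
        obtain ⟨hev, w, hw, hew⟩ := he
        have hvw : v ≠ w := by rintro rfl; exact hv hw
        exact mem_image.mpr ⟨w, hw, ((Sym2.mem_and_mem_iff hvw).mp ⟨hev.2, hew.2⟩).symm⟩
      exact (card_le_card h_subset).trans card_image_le
    have h_union := card_union_add_card_inter (G.incidenceFinset v)
      (s.biUnion fun w => G.incidenceFinset w)
    rw [card_incidenceFinset_eq_degree] at h_union
    have h_choose : (#s + 1).choose 2 = #s + (#s).choose 2 := by
      rw [Nat.choose_succ_succ', Nat.choose_one_right]
    rw [sum_insert hv, biUnion_insert, card_insert_of_notMem hv, h_choose]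
    omega

theorem sum_degree_le_card_edgeFinset_add_choose_two [Fintype V] [DecidableRel G.Adj]
    (s : Finset V) : ∑ v ∈ s, G.degree v ≤ #G.edgeFinset + (#s).choose 2 := by
  classical
  grw [sum_degree_le_card_biUnion_incidenceFinset_add_choose_two,
    biUnion_subset.mpr fun v _ => G.incidenceFinset_subset v]

theorem card_mul_card_le_sum_degree_add_card_of_isClique [Fintype V] [DecidableRel G.Adj]
    (hG : G.IsCompleteMultipartite) {s : Finset V} (hs : G.IsClique s) :
    #s * Fintype.card V ≤ ∑ v ∈ s, G.degree v + Fintype.card V := by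
  classical
  have h_disjoint : (s : Set V).PairwiseDisjoint fun v => (G.neighborFinset v)ᶜ := by
    intro v hv w hw hvw
    refine Finset.disjoint_left.mpr fun u huv huw => ?_
    simp only [mem_compl, mem_neighborFinset] at huv huw
    exact hG.trans _ _ _ huv (by rwa [G.adj_comm]) (hs hv hw hvw)
  calc #s * Fintype.card V
      = ∑ v ∈ s, (G.degree v + #(G.neighborFinset v)ᶜ) := by
        simp only [← card_neighborFinset_eq_degree, card_add_card_compl, sum_const, smul_eq_mul]
    _ = ∑ v ∈ s, G.degree v + #(s.biUnion fun v => (G.neighborFinset v)ᶜ) := by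
        rw [sum_add_distrib, card_biUnion h_disjoint]
    _ ≤ ∑ v ∈ s, G.degree v + Fintype.card V := by
        grw [card_le_univ]

theorem mul_card_le_card_edgeFinset_add_choose_two_add_card_of_isNClique [Fintype V]
    [DecidableRel G.Adj] (hG : G.IsCompleteMultipartite) {k : ℕ} {s : Finset V}
    (hs : G.IsNClique k s) :
    k * Fintype.card V ≤ #G.edgeFinset + k.choose 2 + Fintype.card V := by
  rw [← hs.card_eq]
  grw [card_mul_card_le_sum_degree_add_card_of_isClique hG hs.isClique,
    sum_degree_le_card_edgeFinset_add_choose_two]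

/-- The graph joining two vertices when they lie in different connected components of `G`. -/
def unreachableGraph (G : SimpleGraph V) : SimpleGraph V where
  Adj x y := ¬ G.Reachable x y
  symm := ⟨fun _ _ h h' => h h'.symm⟩
  loopless := ⟨fun x h => h (Reachable.refl x)⟩

theorem isCompleteMultipartite_unreachableGraph (G : SimpleGraph V) :
    (unreachableGraph G).IsCompleteMultipartite :=
  ⟨fun _ _ _ h h' => not_not.mpr ((not_not.mp h).trans (not_not.mp h'))⟩

theorem pathEdges_comm (T : SimpleGraph V) (x y : V) : pathEdges T x y = pathEdges T y x := by
  have h_subset (x y : V) : pathEdges T x y ⊆ pathEdges T y x := by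
    rintro e ⟨p, hp, he⟩
    exact ⟨p.reverse, hp.reverse, by simpa using he⟩
  exact (h_subset x y).antisymm (h_subset y x)

theorem pathEdges_eq_of_isPath (hT : T.IsAcyclic) {x y : V} {p : T.Walk x y} (hp : p.IsPath) :
    pathEdges T x y = {e | e ∈ p.edges} := by
  ext e
  refine ⟨?_, fun he => ⟨p, hp, he⟩⟩
  rintro ⟨q, hq, he⟩
  have hqp : q = p :=
    congrArg Subtype.val ((hT.subsingleton_path x y).elim ⟨q, hq⟩ ⟨p, hp⟩)
  rwa [hqp] at he

theorem inter_pathEdges_nonempty_of_not_reachable_deleteEdges {S : Set (Sym2 V)} {x y : V}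
    (hT : T.Reachable x y) (hS : ¬ (T.deleteEdges S).Reachable x y) :
    (S ∩ pathEdges T x y).Nonempty := by
  obtain ⟨p, hp⟩ := hT.exists_isPath
  by_contra h_empty
  exact hS ⟨p.toDeleteEdges S fun e he heS => h_empty ⟨e, heS, p, hp, he⟩⟩

theorem cycEdges_inter_edgeSet_s8 {x y : V} (hxy : ¬ T.Adj x y) :
    cycEdges T s(x, y) ∩ T.edgeSet = pathEdges T x y := by
  ext e
  constructor
  · rintro ⟨rfl | ⟨u, w, huw, he⟩, heT⟩
    · exact absurd heT hxy
    · rcases Sym2.eq_iff.mp huw with ⟨rfl, rfl⟩ | ⟨rfl, rfl⟩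
      · exact he
      · rwa [pathEdges_comm]
  · rintro ⟨p, hp, he⟩
    exact ⟨Or.inr ⟨x, y, rfl, p, hp, he⟩, p.edges_subset_edgeSet he⟩

theorem cyclesIntersect_mk_mk_iff {x y u w : V} (hxy : ¬ T.Adj x y) (huw : ¬ T.Adj u w) :
    cyclesIntersect T s(x, y) s(u, w) ↔ (pathEdges T x y ∩ pathEdges T u w).Nonempty := by
  rw [cyclesIntersect, Set.inter_inter_distrib_right, cycEdges_inter_edgeSet_s8 hxy,
    cycEdges_inter_edgeSet_s8 huw]

theorem cyclesIntersect_comm {e f : Sym2 V} : cyclesIntersect T e f ↔ cyclesIntersect T f e := by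
  rw [cyclesIntersect, cyclesIntersect, Set.inter_comm (cycEdges T e)]

/-- The intersection graph of the tree-cycles of `T` in `G`; a tree-cycle is represented by the
cycle-edge inducing it. -/
def cycleIntersectionGraph (G T : SimpleGraph V) : SimpleGraph (G \ T).edgeSet where
  Adj e f := e ≠ f ∧ cyclesIntersect T e f
  symm := ⟨fun _ _ h => ⟨h.1.symm, cyclesIntersect_comm.mp h.2⟩⟩
  loopless := ⟨fun _ h => h.1 rfl⟩

theorem treeInterNum_eq_ncard_edgeSet (G T : SimpleGraph V) :
    treeInterNum G T = (cycleIntersectionGraph G T).edgeSet.ncard := by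
  rw [treeInterNum, ← Set.ncard_image_of_injective _ (Sym2.map.injective Subtype.val_injective),
    ← edgeSet_sdiff]
  congr 1
  ext p
  constructor
  · rintro ⟨e, f, rfl, hne, he, hf, hef⟩
    exact ⟨s(⟨e, he⟩, ⟨f, hf⟩), ⟨fun h => hne (congrArg Subtype.val h), hef⟩, rfl⟩
  · rintro ⟨q, hq, rfl⟩
    induction q with | _ e f
    exact ⟨e, f, rfl, fun h => hq.1 (Subtype.ext h), e.2, f.2, hq.2⟩

theorem cycleInterNum_eq_ncard_neighborSet (e : (G \ T).edgeSet) :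
    cycleInterNum G T e = ((cycleIntersectionGraph G T).neighborSet e).ncard := by
  rw [cycleInterNum, ← Set.ncard_image_of_injective _ Subtype.val_injective, ← edgeSet_sdiff]
  congr 1
  ext f
  constructor
  · rintro ⟨hf, hne, hef⟩
    exact ⟨⟨f, hf⟩, ⟨fun h => hne (congrArg Subtype.val h).symm, hef⟩, rfl⟩
  · rintro ⟨f, hf, rfl⟩
    exact ⟨f.2, fun h => hf.1 (Subtype.ext h).symm, hf.2⟩

theorem two_mul_treeInterNum_eq_sum_cycleInterNum (G T : SimpleGraph V)
    [Fintype (G \ T).edgeSet] :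
    2 * treeInterNum G T = ∑ e ∈ (G \ T).edgeFinset, cycleInterNum G T e := by
  classical
  calc 2 * treeInterNum G T
      = 2 * #(cycleIntersectionGraph G T).edgeFinset := by
        rw [treeInterNum_eq_ncard_edgeSet, Set.ncard_eq_toFinset_card', edgeFinset]
    _ = ∑ e, (cycleIntersectionGraph G T).degree e :=
        (sum_degrees_eq_twice_card_edges _).symm
    _ = ∑ e : (G \ T).edgeSet, cycleInterNum G T e := by
        refine sum_congr rfl fun e _ => ?_
        rw [cycleInterNum_eq_ncard_neighborSet, Set.ncard_eq_toFinset_card', degree,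
          neighborFinset]
    _ = ∑ e ∈ (G \ T).edgeFinset, cycleInterNum G T e :=
        (sum_subtype _ (fun _ => mem_edgeFinset) _).symm

theorem card_edgeFinset_sdiff_add_card_of_isTree [Fintype V] [Fintype G.edgeSet]
    [Fintype (G \ T).edgeSet] (hle : T ≤ G) (hT : T.IsTree) :
    #(G \ T).edgeFinset + Fintype.card V = #G.edgeFinset + 1 := by
  classical
  have h_sdiff : (G \ T).edgeFinset = G.edgeFinset \ T.edgeFinset := by ext e; simp
  rw [h_sdiff, ← hT.card_edgeFinset, ← add_assoc,
    card_sdiff_add_card_eq_card (edgeFinset_mono hle)]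

theorem exists_adj_adj_mem_pathEdges {x y : V} (hT : T.Reachable x y) (hne : x ≠ y)
    (hxy : ¬ T.Adj x y) :
    ∃ a c, T.Adj x a ∧ T.Adj a c ∧ x ≠ c ∧ {s(x, a), s(a, c)} ⊆ pathEdges T x y := by
  obtain ⟨p, hp⟩ := hT.exists_isPath
  cases p with
  | nil => exact absurd rfl hne
  | @cons _ a _ hxa q =>
    cases q with
    | nil => exact absurd hxa hxy
    | @cons _ c _ hac r =>
      refine ⟨a, c, hxa, hac, ?_, ?_⟩
      · rintro rfl
        simp [Walk.cons_isPath_iff] at hp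
      · rintro e (rfl | rfl) <;> exact ⟨_, hp, by simp⟩

theorem is3Clique_unreachableGraph_deleteEdges_pair [DecidableEq V] (hT : T.IsAcyclic) {x a c : V}
    (hxa : T.Adj x a) (hac : T.Adj a c) (hxc : x ≠ c) :
    (unreachableGraph (T.deleteEdges {s(x, a), s(a, c)})).IsNClique 3 {x, a, c} := by
  have h_bridge := isAcyclic_iff_forall_adj_isBridge.mp hT
  have h_le_xa : T.deleteEdges {s(x, a), s(a, c)} ≤ T.deleteEdges {s(x, a)} :=
    deleteEdges_anti (by simp)
  have h_le_ac : T.deleteEdges {s(x, a), s(a, c)} ≤ T.deleteEdges {s(a, c)} :=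
    deleteEdges_anti (by simp)
  have h_ca : (T.deleteEdges {s(x, a)}).Adj c a := by
    simp [deleteEdges_adj, hac.symm, hxc.symm, hac.ne']
  exact is3Clique_triple_iff.mpr ⟨fun h => h_bridge hxa (h.mono h_le_xa),
    fun h => h_bridge hxa ((h.mono h_le_xa).trans h_ca.reachable),
    fun h => h_bridge hac (h.mono h_le_ac)⟩

theorem edgeSet_unreachableGraph_deleteEdges_subset (hT : T.Preconnected) {S : Set (Sym2 V)}
    {x y : V} (hxy : ¬ T.Adj x y) (hS : S ⊆ pathEdges T x y) :
    (unreachableGraph (T.deleteEdges S)).edgeSet ⊆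
      S ∪ {s(x, y)} ∪ {f | f ∈ (⊤ : SimpleGraph V).edgeSet \ T.edgeSet ∧ f ≠ s(x, y) ∧
        cyclesIntersect T s(x, y) f} := by
  intro f hf
  induction f with | _ u w
  have huw : ¬ (T.deleteEdges S).Reachable u w := hf
  by_cases h_mem : s(u, w) ∈ S ∪ {s(x, y)}
  · exact Or.inl h_mem
  have h_not_adj : ¬ T.Adj u w := fun h =>
    huw (deleteEdges_adj.mpr ⟨h, fun hS => h_mem (Or.inl hS)⟩).reachable
  have h_inter := inter_pathEdges_nonempty_of_not_reachable_deleteEdges (hT u w) huw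
  have h_ne : u ≠ w := by rintro rfl; exact huw (Reachable.refl u)
  exact Or.inr ⟨⟨h_ne, h_not_adj⟩, fun h => h_mem (Or.inr h),
    (cyclesIntersect_mk_mk_iff hxy h_not_adj).mpr (h_inter.mono (Set.inter_subset_inter_left _ hS))⟩

theorem ncard_edgeSet_unreachableGraph_deleteEdges_le [Finite V] (hT : T.Preconnected)
    {S : Set (Sym2 V)} {x y : V} (hxy : ¬ T.Adj x y) (hS : S ⊆ pathEdges T x y) :
    (unreachableGraph (T.deleteEdges S)).edgeSet.ncard ≤
      S.ncard + 1 + cycleInterNum ⊤ T s(x, y) := by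
  grw [Set.ncard_le_ncard (edgeSet_unreachableGraph_deleteEdges_subset hT hxy hS) (Set.toFinite _),
    Set.ncard_union_le, Set.ncard_union_le, Set.ncard_singleton, cycleInterNum]

theorem two_mul_card_sub_three_le_cycleInterNum_top [Fintype V] (hT : T.IsTree) {e : Sym2 V}
    (he : e ∈ (⊤ \ T).edgeSet) : 2 * (Fintype.card V - 3) ≤ cycleInterNum ⊤ T e := by
  classical
  induction e with | _ x y
  have hxy : ¬ T.Adj x y := he.2
  obtain ⟨a, c, hxa, hac, hxc, h_path⟩ :=
    exists_adj_adj_mem_pathEdges (hT.connected x y) he.1 hxy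
  have h_lower := mul_card_le_card_edgeFinset_add_choose_two_add_card_of_isNClique
    (isCompleteMultipartite_unreachableGraph _)
    (is3Clique_unreachableGraph_deleteEdges_pair hT.isAcyclic hxa hac hxc)
  have h_upper := ncard_edgeSet_unreachableGraph_deleteEdges_le hT.connected.preconnected hxy h_path
  have h_pair : ({s(x, a), s(a, c)} : Set (Sym2 V)).ncard ≤ 2 :=
    (Set.ncard_insert_le _ _).trans_eq (by rw [Set.ncard_singleton])
  rw [Set.ncard_eq_toFinset_card', ← edgeFinset] at h_upper
  rw [Nat.choose_succ_self_right] at h_lower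
  omega

theorem IsStarSpanningTree.notMem_of_mem_edgeSet_sdiff {v : V} (h : IsStarSpanningTree G T v)
    {e : Sym2 V} (he : e ∈ (G \ T).edgeSet) : v ∉ e := by
  rintro ⟨w, rfl⟩
  exact he.2 (h.2.2 w (Adj.ne' he.1))

theorem IsStarSpanningTree.pathEdges_eq {v x y : V} (h : IsStarSpanningTree G T v)
    (hx : x ≠ v) (hy : y ≠ v) (hxy : x ≠ y) : pathEdges T x y = {s(v, x), s(v, y)} := by
  let p : T.Walk x y := .cons (h.2.2 x hx).symm (.cons (h.2.2 y hy) .nil)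
  have hp : p.IsPath := by simp [p, Walk.cons_isPath_iff, hx, hxy, hy.symm]
  rw [pathEdges_eq_of_isPath h.2.1.isAcyclic hp]
  ext e
  simp [p, Sym2.eq_swap (a := x)]

theorem IsStarSpanningTree.exists_mem_mem_of_cyclesIntersect {v : V}
    (h : IsStarSpanningTree G T v) {e f : Sym2 V} (he : e ∈ (G \ T).edgeSet)
    (hf : f ∈ (G \ T).edgeSet) (hef : cyclesIntersect T e f) : ∃ c, c ∈ e ∧ c ∈ f := by
  have hve := h.notMem_of_mem_edgeSet_sdiff he
  have hvf := h.notMem_of_mem_edgeSet_sdiff hf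
  induction e with | _ x y
  induction f with | _ u w
  simp only [Sym2.mem_iff, not_or] at hve hvf
  rw [cyclesIntersect_mk_mk_iff he.2 hf.2,
    h.pathEdges_eq (Ne.symm hve.1) (Ne.symm hve.2) he.1.ne,
    h.pathEdges_eq (Ne.symm hvf.1) (Ne.symm hvf.2) hf.1.ne,
    ← Set.image_pair (fun c => s(v, c)), ← Set.image_pair (fun c => s(v, c)),
    ← Set.image_inter fun _ _ => Sym2.congr_right.mp] at hef
  obtain ⟨c, hce, hcf⟩ := hef.of_image
  exact ⟨c, by simpa using hce, by simpa using hcf⟩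

theorem IsStarSpanningTree.exists_eq_mk_of_cyclesIntersect {v x y : V}
    (h : IsStarSpanningTree G T v) (he : s(x, y) ∈ (G \ T).edgeSet) {f : Sym2 V}
    (hf : f ∈ (G \ T).edgeSet) (hne : f ≠ s(x, y)) (hef : cyclesIntersect T s(x, y) f) :
    ∃ w ∉ ({x, y, v} : Set V), f = s(x, w) ∨ f = s(y, w) := by
  obtain ⟨c, hce, w, rfl⟩ := h.exists_mem_mem_of_cyclesIntersect he hf hef
  have hvf := h.notMem_of_mem_edgeSet_sdiff hf
  have hcw : c ≠ w := Adj.ne hf.1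
  have hwv : w ≠ v := by rintro rfl; simp at hvf
  rcases Sym2.mem_iff.mp hce with rfl | rfl
  · have hwy : w ≠ y := by rintro rfl; exact hne rfl
    exact ⟨w, by simp [hcw.symm, hwy, hwv], Or.inl rfl⟩
  · have hwx : w ≠ x := by rintro rfl; exact hne Sym2.eq_swap
    exact ⟨w, by simp [hcw.symm, hwx, hwv], Or.inr rfl⟩

theorem IsStarSpanningTree.cycleInterNum_le [Fintype V] {v : V} (h : IsStarSpanningTree G T v)
    {e : Sym2 V} (he : e ∈ (G \ T).edgeSet) :
    cycleInterNum G T e ≤ 2 * (Fintype.card V - 3) := by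
  have hve := h.notMem_of_mem_edgeSet_sdiff he
  induction e with | _ x y
  simp only [Sym2.mem_iff, not_or] at hve
  have h_card : ({x, y, v}ᶜ : Set V).ncard = Fintype.card V - 3 := by
    rw [Set.ncard_compl, Set.ncard_eq_three.mpr
      ⟨x, y, v, Adj.ne he.1, Ne.symm hve.1, Ne.symm hve.2, rfl⟩, Nat.card_eq_fintype_card]
  have h_subset : {f | f ∈ G.edgeSet \ T.edgeSet ∧ f ≠ s(x, y) ∧ cyclesIntersect T s(x, y) f} ⊆
      (fun w => s(x, w)) '' {x, y, v}ᶜ ∪ (fun w => s(y, w)) '' {x, y, v}ᶜ := by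
    rintro f ⟨hf, hne, hef⟩
    rw [← edgeSet_sdiff] at hf
    obtain ⟨w, hw, rfl | rfl⟩ := h.exists_eq_mk_of_cyclesIntersect he hf hne hef
    · exact Or.inl ⟨w, hw, rfl⟩
    · exact Or.inr ⟨w, hw, rfl⟩
  grw [cycleInterNum, Set.ncard_le_ncard h_subset (Set.toFinite _), Set.ncard_union_le,
    Set.ncard_image_le (Set.toFinite _), Set.ncard_image_le (Set.toFinite _), h_card, two_mul]

end

/-- In the complete graph `K_n`, a star spanning tree `T_s` satisfies
`∩(T_s) ≤ ∩(T)` for every spanning tree `T`; star spanning trees minimize the tree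
intersection number. -/
theorem stmt_8 {V : Type*} [Fintype V] (Ts T : SimpleGraph V) (v : V)
    (hTs : IsStarSpanningTree (⊤ : SimpleGraph V) Ts v)
    (hle : T ≤ (⊤ : SimpleGraph V)) (hT : T.IsTree) :
    treeInterNum (⊤ : SimpleGraph V) Ts ≤ treeInterNum (⊤ : SimpleGraph V) T := by
  classical
  have h_count : #(⊤ \ Ts).edgeFinset = #(⊤ \ T).edgeFinset := by
    have h_star := card_edgeFinset_sdiff_add_card_of_isTree hTs.1 hTs.2.1
    have h_tree := card_edgeFinset_sdiff_add_card_of_isTree hle hT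
    omega
  suffices h : 2 * treeInterNum ⊤ Ts ≤ 2 * treeInterNum ⊤ T by omega
  calc 2 * treeInterNum ⊤ Ts
      = ∑ e ∈ (⊤ \ Ts).edgeFinset, cycleInterNum ⊤ Ts e :=
        two_mul_treeInterNum_eq_sum_cycleInterNum ⊤ Ts
    _ ≤ #(⊤ \ Ts).edgeFinset • (2 * (Fintype.card V - 3)) :=
        sum_le_card_nsmul _ _ _ fun _ he => hTs.cycleInterNum_le (mem_edgeFinset.mp he)
    _ = #(⊤ \ T).edgeFinset • (2 * (Fintype.card V - 3)) := by rw [h_count]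
    _ ≤ ∑ e ∈ (⊤ \ T).edgeFinset, cycleInterNum ⊤ T e :=
        card_nsmul_le_sum _ _ _ fun _ he =>
          two_mul_card_sub_three_le_cycleInterNum_top hT (mem_edgeFinset.mp he)
    _ = 2 * treeInterNum ⊤ T := (two_mul_treeInterNum_eq_sum_cycleInterNum ⊤ T).symm
end
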